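/- Let A = p(s; t) and H = p(s′; t′) be moded atoms with the same predicate symbol (so s, s′ have equal lengths and t, t′ have equal lengths), such that Var(A) ∩ Var(H) = ∅, every term of the input tuple s is ground, and H is weakly linear (every variable with more than one occurrence in H occurs in an input position of H). Then the equation set (s ≐̈ s′) ∪ (t ≐̈ t′) is WNSTO. -/

import Mathlib

/-- Finite first-order terms: variables and function applications.
A function symbol is identified by its name together with the number of
arguments it is applied to (fixed arity). -/
inductive Trm : Type where
  | var : ℕ → Trm
  | fn  : ℕ → List Trm → Trm

namespace Trm

/-- `|t|`: the number of occurrences of variables and function symbols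
(including constants) in the term `t`. -/
def size : Trm → ℕ
  | .var _ => 1
  | .fn _ ts => 1 + (ts.attach.map (fun ⟨t, _⟩ => size t)).sum
decreasing_by
  have := List.sizeOf_lt_of_mem ‹_ ∈ ts›
  simp [Trm.fn.sizeOf_spec]; omega

/-- Application of a substitution (a map from variables to terms) to a term. -/
def subst (σ : ℕ → Trm) : Trm → Trm
  | .var x => σ x
  | .fn f ts => .fn f (ts.attach.map (fun ⟨t, _⟩ => subst σ t))
decreasing_by
  have := List.sizeOf_lt_of_mem ‹_ ∈ ts›
  simp [Trm.fn.sizeOf_spec]; omega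

/-- The number of occurrences of the variable `x` in a term. -/
def count (x : ℕ) : Trm → ℕ
  | .var y => if y = x then 1 else 0
  | .fn _ ts => (ts.attach.map (fun ⟨t, _⟩ => count x t)).sum
decreasing_by
  have := List.sizeOf_lt_of_mem ‹_ ∈ ts›
  simp [Trm.fn.sizeOf_spec]; omega

/-- `Occurs x t` : the variable `x` occurs in the term `t`. -/
inductive Occurs (x : ℕ) : Trm → Prop where
  | var : Occurs x (.var x)
  | fn {f : ℕ} {ts : List Trm} {t : Trm} : t ∈ ts → Occurs x t → Occurs x (.fn f ts)

end Trm

/-- The set of variables occurring in a term. -/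
def varSet (t : Trm) : Set ℕ := {x | Trm.Occurs x t}

/-- The set of variables occurring in a list (tuple) of terms. -/
def varsL (l : List Trm) : Set ℕ := {x | ∃ t ∈ l, Trm.Occurs x t}

/-- The number of occurrences of a variable in a list (tuple) of terms. -/
def countL (x : ℕ) (l : List Trm) : ℕ := (l.map (Trm.count x)).sum

/-- A term is ground if no variable occurs in it. -/
def Ground (t : Trm) : Prop := ∀ x, ¬ Trm.Occurs x t

/-- An equation set: a set of equations `s ≐ t` between terms,
represented as pairs of terms. -/
abbrev EqSet := Set (Trm × Trm)

/-- `σ` is a solution (unifier) of the equation set `E`. -/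
def Solves (σ : ℕ → Trm) (E : EqSet) : Prop :=
  ∀ e ∈ E, Trm.subst σ e.1 = Trm.subst σ e.2

/-- `E` is unifiable: it has a unifier. -/
def Unifiable (E : EqSet) : Prop := ∃ σ, Solves σ E

/-- `θ` is a most general unifier of `E`. -/
def IsMgu (θ : ℕ → Trm) (E : EqSet) : Prop :=
  Solves θ E ∧ ∀ σ, Solves σ E → ∃ ρ, ∀ x, σ x = Trm.subst ρ (θ x)

/-- The equation set `s ≐̈ t` pairing corresponding members of two
equal-length tuples of terms. -/
def zipEqs (s t : List Trm) : EqSet := {e | e ∈ s.zip t}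

/-- The substitution `{X/t}` mapping `X` to `t` and every other variable
to itself. -/
def single (X : ℕ) (t : Trm) : ℕ → Trm :=
  fun y => if y = X then t else .var y

/-- The equation set `Eθ`: the substitution applied to both sides of
every equation of `E`. -/
def substE (θ : ℕ → Trm) (E : EqSet) : EqSet :=
  (fun e => (Trm.subst θ e.1, Trm.subst θ e.2)) '' E

/-- One step of the Martelli–Montanari algorithm MMA: actions (1), (3), (4),
(5).  (Actions (2) and (6) halt with failure and produce no next equation
set; their applicability is captured by `ClashApp` and `OccApp` below.)
Two function applications carry the same function symbol iff they have the
same name and the same number of arguments (fixed arity). -/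
inductive MMAStep : EqSet → EqSet → Prop where
  /-- Action (1): replace `f(s1,…,sn) ≐ f(t1,…,tn)` by `s1 ≐ t1, …, sn ≐ tn`. -/
  | decomp {E : EqSet} {f : ℕ} {sl tl : List Trm} :
      (Trm.fn f sl, Trm.fn f tl) ∈ E → sl.length = tl.length →
      MMAStep E ((E \ {(Trm.fn f sl, Trm.fn f tl)}) ∪ {e | e ∈ sl.zip tl})
  /-- Action (3): delete an equation `X ≐ X`. -/
  | delete {E : EqSet} {x : ℕ} :
      (Trm.var x, Trm.var x) ∈ E →
      MMAStep E (E \ {(Trm.var x, Trm.var x)})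
  /-- Action (4): replace `t ≐ X` (`t` not a variable) by `X ≐ t`. -/
  | flip {E : EqSet} {t : Trm} {x : ℕ} :
      (t, Trm.var x) ∈ E → (∀ y, t ≠ Trm.var y) →
      MMAStep E ((E \ {(t, Trm.var x)}) ∪ {(Trm.var x, t)})
  /-- Action (5): on `X ≐ t` with `X ∉ Var(t)` and `X` occurring elsewhere,
  apply `{X/t}` to all other equations. -/
  | elim {E : EqSet} {x : ℕ} {t : Trm} :
      (Trm.var x, t) ∈ E → ¬ Trm.Occurs x t →
      (∃ e ∈ E \ {(Trm.var x, t)}, Trm.Occurs x e.1 ∨ Trm.Occurs x e.2) →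
      MMAStep E ({(Trm.var x, t)} ∪ substE (single x t) (E \ {(Trm.var x, t)}))

/-- Action (2) is applicable to `E`: `E` contains an equation
`f(s1,…,sn) ≐ g(t1,…,tm)` where the two function symbols differ. -/
def ClashApp (E : EqSet) : Prop :=
  ∃ f sl g tl, (Trm.fn f sl, Trm.fn g tl) ∈ E ∧
    (f ≠ g ∨ sl.length ≠ tl.length)

/-- Action (6) (the occur-check) is applicable to `E`: `E` contains an
equation `X ≐ t` with `X ∈ Var(t)` and `X ≠ t`. -/
def OccApp (E : EqSet) : Prop :=
  ∃ x t, (Trm.var x, t) ∈ E ∧ Trm.Occurs x t ∧ t ≠ Trm.var x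

/-- One step of the algorithm MMA⁻ (MMA without the occur-check):
actions (1), (3), (4), (5a), (5b). -/
inductive MMAmStep : EqSet → EqSet → Prop where
  /-- Action (1). -/
  | decomp {E : EqSet} {f : ℕ} {sl tl : List Trm} :
      (Trm.fn f sl, Trm.fn f tl) ∈ E → sl.length = tl.length →
      MMAmStep E ((E \ {(Trm.fn f sl, Trm.fn f tl)}) ∪ {e | e ∈ sl.zip tl})
  /-- Action (3). -/
  | delete {E : EqSet} {x : ℕ} :
      (Trm.var x, Trm.var x) ∈ E →
      MMAmStep E (E \ {(Trm.var x, Trm.var x)})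
  /-- Action (4). -/
  | flip {E : EqSet} {t : Trm} {x : ℕ} :
      (t, Trm.var x) ∈ E → (∀ y, t ≠ Trm.var y) →
      MMAmStep E ((E \ {(t, Trm.var x)}) ∪ {(Trm.var x, t)})
  /-- Action (5a): on `X ≐ Y` with `X, Y` distinct variables and `X`
  occurring elsewhere, apply `{X/Y}` to all other equations. -/
  | elimVar {E : EqSet} {x y : ℕ} :
      (Trm.var x, Trm.var y) ∈ E → x ≠ y →
      (∃ e ∈ E \ {(Trm.var x, Trm.var y)}, Trm.Occurs x e.1 ∨ Trm.Occurs x e.2) →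
      MMAmStep E
        ({(Trm.var x, Trm.var y)} ∪
          substE (single x (Trm.var y)) (E \ {(Trm.var x, Trm.var y)}))
  /-- Action (5b): on `X ≐ t`, `X ≐ u` with `t, u` distinct non-variable
  terms and `|t| ≤ |u|`, replace `X ≐ u` by `t ≐ u`. -/
  | merge {E : EqSet} {x : ℕ} {t u : Trm} :
      (Trm.var x, t) ∈ E → (Trm.var x, u) ∈ E → t ≠ u →
      (∀ y, t ≠ Trm.var y) → (∀ y, u ≠ Trm.var y) → t.size ≤ u.size →
      MMAmStep E ((E \ {(Trm.var x, u)}) ∪ {(t, u)})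

/-- `F` is reachable from `E` by (non-failing) actions of MMA. -/
def Reachable (E F : EqSet) : Prop := Relation.ReflTransGen MMAStep E F

/-- `E` is NSTO: no run of MMA on `E` performs action (6), i.e. the
occur-check action is never applicable along any run. -/
def NSTO (E : EqSet) : Prop := ∀ F, Reachable E F → ¬ OccApp F

/-- `E` is WNSTO: there exists an occur-check free run of MMA on `E`, i.e. a
maximal run that either halts with failure by action (2), or ends with an
equation set to which no action (including (2) and (6)) applies — without
ever performing action (6). -/
def WNSTO (E : EqSet) : Prop :=
  ∃ F, Reachable E F ∧
    (ClashApp F ∨ (¬ ClashApp F ∧ ¬ OccApp F ∧ ∀ F', ¬ MMAStep F F'))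

/-!
An equation `X ≐ t` whose variable `X` occurs neither in `t` nor in the remaining equations can be
set aside: a run on the remaining equations only ever instantiates `t`, and never by a term
containing `X`. So it is enough to eliminate one equation after the other, setting aside the
bindings found on the way.

The input equations come first. Their left-hand sides are ground, so they decompose, unless there
is a clash, into bindings of variables to ground terms, which the occur-check cannot affect.
Applying these bindings removes every variable of the input positions of `H`, hence every variable
that had several occurrences in `H`. What remains is a set of equations whose left-hand and
right-hand sides share no variable and whose right-hand sides are jointly linear. Eliminating any of
its equations preserves this: a variable `X` on the left is bound to a term `r` whose variables
occur in no other equation, and a variable on the right occurs nowhere else.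
-/

namespace Trm

@[elab_as_elim, induction_eliminator]
theorem induction {P : Trm → Prop} (var : ∀ x, P (.var x))
    (fn : ∀ f ts, (∀ t ∈ ts, P t) → P (.fn f ts)) : ∀ t, P t
  | .var x => var x
  | .fn f ts => fn f ts fun t _ => induction var fn t

theorem size_pos (t : Trm) : 0 < t.size := by
  cases t <;> simp [size]

theorem size_fn (f : ℕ) (ts : List Trm) : (fn f ts).size = 1 + (ts.map size).sum := by
  simp [size]

theorem subst_fn (σ : ℕ → Trm) (f : ℕ) (ts : List Trm) :
    (fn f ts).subst σ = fn f (ts.map (subst σ)) := by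
  simp [subst]

theorem count_fn (x f : ℕ) (ts : List Trm) : (fn f ts).count x = countL x ts := by
  simp [count, countL]

theorem occurs_var {x y : ℕ} : Occurs x (var y) ↔ x = y :=
  ⟨fun h => by cases h; rfl, fun h => h ▸ .var⟩

theorem occurs_fn {x f : ℕ} {ts : List Trm} : Occurs x (fn f ts) ↔ x ∈ varsL ts :=
  ⟨fun h => by cases h with | fn ht hx => exact ⟨_, ht, hx⟩, fun ⟨_, ht, hx⟩ => .fn ht hx⟩

theorem occurs_subst {σ : ℕ → Trm} {y : ℕ} {t : Trm} :
    Occurs y (t.subst σ) ↔ ∃ x, Occurs x t ∧ Occurs y (σ x) := by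
  induction t with
  | var x => simp [subst, occurs_var]
  | fn f ts ih =>
    simp only [subst_fn, occurs_fn, varsL, Set.mem_ofPred_eq, List.mem_map,
      exists_exists_and_eq_and]
    grind

theorem occurs_subst_single {x y : ℕ} {u t : Trm} :
    Occurs y (t.subst (single x u)) ↔ y ≠ x ∧ Occurs y t ∨ Occurs x t ∧ Occurs y u := by
  rw [occurs_subst]
  constructor
  · rintro ⟨z, hz, hy⟩
    by_cases hzx : z = x
    · rw [single, if_pos hzx] at hy
      exact .inr ⟨hzx ▸ hz, hy⟩
    · rw [single, if_neg hzx, occurs_var] at hy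
      exact .inl ⟨hy ▸ hzx, hy ▸ hz⟩
  · rintro (⟨hyx, hy⟩ | ⟨hx, hy⟩)
    · exact ⟨y, hy, by simpa only [single, if_neg hyx] using .var⟩
    · exact ⟨x, hx, by simpa only [single, if_true] using hy⟩

theorem subst_single_eq_self {x : ℕ} {u t : Trm} (ht : ¬ Occurs x t) :
    t.subst (single x u) = t := by
  induction t with
  | var y => rw [subst, single, if_neg fun h => ht (occurs_var.2 h.symm)]
  | fn f ts ih =>
    rw [subst_fn, List.map_congr_left fun t hts => ih t hts fun h => ht (.fn hts h), List.map_id']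

theorem count_pos {x : ℕ} {t : Trm} : 0 < t.count x ↔ Occurs x t := by
  induction t with
  | var y => rw [count, occurs_var]; grind
  | fn f ts ih =>
    simp only [count_fn, countL, occurs_fn, varsL, Set.mem_ofPred_eq, Nat.pos_iff_ne_zero, ne_eq,
      List.sum_eq_zero_iff, List.forall_mem_map, not_forall, exists_prop] at ih ⊢
    grind

theorem count_subst_single_le {x y : ℕ} {u t : Trm} (hu : Ground u) :
    (t.subst (single x u)).count y ≤ t.count y := by
  induction t with
  | var z =>
    rw [subst, single]
    split_ifs
    · simp [Nat.eq_zero_of_not_pos (mt count_pos.1 (hu y))]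
    · rfl
  | fn f ts ih =>
    simp only [subst_fn, count_fn, countL, List.map_map]
    exact List.sum_le_sum ih

end Trm

open Trm

section Tuples

variable {x y : ℕ} {t u : Trm} {l l' : List Trm}

theorem mem_varsL_cons : x ∈ varsL (t :: l) ↔ Occurs x t ∨ x ∈ varsL l := by
  simp [varsL]

theorem mem_varsL_append : x ∈ varsL (l ++ l') ↔ x ∈ varsL l ∨ x ∈ varsL l' := by
  simp only [varsL, Set.mem_ofPred_eq, List.mem_append]; grind

theorem mem_varsL_map_subst_single :
    y ∈ varsL (l.map (subst (single x u))) ↔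
      y ≠ x ∧ y ∈ varsL l ∨ x ∈ varsL l ∧ Occurs y u := by
  simpa only [subst_fn, occurs_fn] using occurs_subst_single (t := fn 0 l)

theorem varsL_map_subst_single_subset (hu : Ground u) :
    varsL (l.map (subst (single x u))) ⊆ varsL l := fun y hy =>
  (mem_varsL_map_subst_single.1 hy).elim And.right fun h => absurd h.2 (hu y)

theorem map_subst_single_eq_self (hx : x ∉ varsL l) : l.map (subst (single x u)) = l := by
  rw [List.map_congr_left fun t ht => subst_single_eq_self fun h => hx ⟨t, ht, h⟩, List.map_id']

theorem countL_cons : countL x (t :: l) = t.count x + countL x l := by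
  simp [countL]

theorem countL_append : countL x (l ++ l') = countL x l + countL x l' := by
  simp [countL]

theorem countL_pos : 0 < countL x l ↔ x ∈ varsL l := by
  rw [← count_fn x 0, count_pos, occurs_fn]

theorem countL_map_subst_single_le (hu : Ground u) :
    countL y (l.map (subst (single x u))) ≤ countL y l := by
  simpa only [subst_fn, count_fn] using count_subst_single_le (t := fn 0 l) hu

end Tuples

/-- `Var(E)`, the set of variables occurring in the equation set `E`. -/
def eqVars (E : EqSet) : Set ℕ := {x | ∃ e ∈ E, Occurs x e.1 ∨ Occurs x e.2}

section EquationSets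

variable {E F : EqSet} {x : ℕ} {t u : Trm} {l l' r r' : List Trm}

theorem eqVars_mono (h : E ⊆ F) : eqVars E ⊆ eqVars F := fun _ ⟨e, he, hx⟩ => ⟨e, h he, hx⟩

theorem eqVars_union : eqVars (E ∪ F) = eqVars E ∪ eqVars F := by
  ext x; simp only [eqVars, Set.mem_union, Set.mem_ofPred_eq]; grind

theorem mem_eqVars_singleton : x ∈ eqVars {(t, u)} ↔ Occurs x t ∨ Occurs x u := by
  simp [eqVars]

theorem zipEqs_cons : zipEqs (t :: l) (u :: r) = insert (t, u) (zipEqs l r) := by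
  ext; simp [zipEqs]

theorem zipEqs_append (h : l.length = r.length) :
    zipEqs (l ++ l') (r ++ r') = zipEqs l r ∪ zipEqs l' r' := by
  ext; simp [zipEqs, List.zip_append h]

theorem substE_zipEqs (σ : ℕ → Trm) :
    substE σ (zipEqs l r) = zipEqs (l.map (subst σ)) (r.map (subst σ)) := by
  ext; simp [substE, zipEqs, List.zip_map]

theorem eqVars_zipEqs_subset : eqVars (zipEqs l r) ⊆ varsL l ∪ varsL r := by
  rintro x ⟨e, he, hx⟩
  exact hx.imp (⟨_, (List.of_mem_zip he).1, ·⟩) (⟨_, (List.of_mem_zip he).2, ·⟩)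

theorem varsL_subset_eqVars_zipEqs (h : l.length = r.length) :
    varsL r ⊆ eqVars (zipEqs l r) := by
  rintro x ⟨t, ht, hx⟩
  rw [← List.map_snd_zip h.ge] at ht
  obtain ⟨e, he, rfl⟩ := List.mem_map.1 ht
  exact ⟨e, he, .inr hx⟩

theorem mem_eqVars_substE_single {y : ℕ} :
    y ∈ eqVars (substE (single x u) E) ↔
      y ≠ x ∧ y ∈ eqVars E ∨ x ∈ eqVars E ∧ Occurs y u := by
  simp only [eqVars, substE, Set.mem_ofPred_eq, Set.exists_mem_image, occurs_subst_single]
  grind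

theorem substE_single_eq_self (hx : x ∉ eqVars E) : substE (single x u) E = E := by
  have fixed : ∀ e ∈ E, (e.1.subst (single x u), e.2.subst (single x u)) = e := fun e he => by
    rw [subst_single_eq_self fun h => hx ⟨e, he, .inl h⟩,
      subst_single_eq_self fun h => hx ⟨e, he, .inr h⟩]
  rw [substE, Set.image_congr fixed, Set.image_id']

theorem substE_subset_zipEqs {σ : ℕ → Trm} (h : E ⊆ zipEqs l r) :
    substE σ E ⊆ zipEqs (l.map (subst σ)) (r.map (subst σ)) :=
  substE_zipEqs (l := l) (r := r) σ ▸ Set.image_mono h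

end EquationSets

/-- Solved equation sets `{X₁ ≐ t₁, …, Xₙ ≐ tₙ}`: every `Xᵢ` occurs exactly once in the whole set.
These are the successful final sets of a run of MMA. -/
def Solved (E : EqSet) : Prop :=
  ∀ e ∈ E, ∃ x t, e = (var x, t) ∧ ¬ Occurs x t ∧ x ∉ eqVars (E \ {e})

theorem Solved.not_occurs {E : EqSet} {x : ℕ} {t : Trm} (h : Solved E) (he : (var x, t) ∈ E) :
    ¬ Occurs x t := by
  obtain ⟨_, _, ⟨⟩, hx, -⟩ := h _ he
  exact hx

theorem Solved.notMem_eqVars_diff {E : EqSet} {x : ℕ} {t : Trm} (h : Solved E)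
    (he : (var x, t) ∈ E) : x ∉ eqVars (E \ {(var x, t)}) := by
  obtain ⟨_, _, ⟨⟩, -, hx⟩ := h _ he
  exact hx

theorem Solved.not_mmaStep {E F : EqSet} (h : Solved E) : ¬ MMAStep E F := by
  rintro (⟨he, -⟩ | he | ⟨he, ht⟩ | ⟨he, -, hx⟩)
  · obtain ⟨_, _, ⟨⟩, -⟩ := h _ he
  · exact h.not_occurs he .var
  · obtain ⟨_, _, ⟨⟩, -⟩ := h _ he
    exact ht _ rfl
  · exact h.notMem_eqVars_diff he hx

theorem solved_of_terminal {E : EqSet} (hclash : ¬ ClashApp E) (hocc : ¬ OccApp E)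
    (hstep : ∀ F, ¬ MMAStep E F) : Solved E := by
  rintro ⟨t, u⟩ he
  cases t with
  | var x =>
    have hxu : ¬ Occurs x u := fun hx =>
      hocc ⟨x, u, he, hx, fun hu => hstep _ (.delete (x := x) (hu ▸ he))⟩
    exact ⟨x, u, rfl, hxu, fun hx => hstep _ (.elim he hxu hx)⟩
  | fn f ts =>
    cases u with
    | var y => exact absurd (.flip he (by simp)) (hstep _)
    | fn g us =>
      by_cases hfg : f = g ∧ ts.length = us.length
      · obtain ⟨rfl, hlen⟩ := hfg
        exact absurd (.decomp he hlen) (hstep _)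
      · exact absurd ⟨f, ts, g, us, he, by tauto⟩ hclash

theorem solved_iff_terminal {E : EqSet} :
    Solved E ↔ ¬ ClashApp E ∧ ¬ OccApp E ∧ ∀ F, ¬ MMAStep E F := by
  refine ⟨fun h => ⟨?_, ?_, fun _ => h.not_mmaStep⟩, fun h => solved_of_terminal h.1 h.2.1 h.2.2⟩
  · rintro ⟨f, ts, g, us, he, -⟩
    obtain ⟨_, _, ⟨⟩, -⟩ := h _ he
  · rintro ⟨x, t, he, hx, -⟩
    exact h.not_occurs he hx

theorem wnsto_iff {E : EqSet} :
    WNSTO E ↔ ∃ F, Reachable E F ∧ (ClashApp F ∨ Solved F) := by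
  simp only [WNSTO, solved_iff_terminal]

theorem WNSTO.of_reachable {E F : EqSet} (h : Reachable E F) (hF : WNSTO F) : WNSTO E :=
  let ⟨G, hG, hfinal⟩ := hF
  ⟨G, h.trans hG, hfinal⟩

theorem reachable_elim {E : EqSet} {x : ℕ} {t : Trm} (he : (var x, t) ∈ E)
    (ht : ¬ Occurs x t) :
    Reachable E (insert (var x, t) (substE (single x t) (E \ {(var x, t)}))) := by
  by_cases hx : x ∈ eqVars (E \ {(var x, t)})
  · exact .single (.elim he ht hx)
  · rw [substE_single_eq_self hx, Set.insert_sdiff_self_of_mem he]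
    exact .refl

section SetAside

variable {E F : EqSet} {v x : ℕ} {r t : Trm}

theorem reachable_insert_elim (hv : v ∉ eqVars E) (he : (var x, t) ∈ E) (ht : ¬ Occurs x t) :
    Reachable (insert (var v, r) E) (insert (var v, r.subst (single x t))
      (insert (var x, t) (substE (single x t) (E \ {(var x, t)})))) := by
  have hvx : v ≠ x := fun h => hv ⟨_, he, .inl (occurs_var.2 h)⟩
  have hne : (var v, r) ≠ (var x, t) := fun h => hvx (by simpa using congrArg Prod.fst h)
  have hsubst : substE (single x t) (insert (var v, r) E \ {(var x, t)}) =
      insert (var v, r.subst (single x t)) (substE (single x t) (E \ {(var x, t)})) := by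
    rw [← Set.insert_sdiff_singleton_comm hne, substE, substE, Set.image_insert_eq,
      subst_single_eq_self fun h => hvx (occurs_var.1 h).symm]
  rw [Set.insert_comm, ← hsubst]
  exact reachable_elim (.inr he) ht

theorem MMAStep.eqVars_subset (h : MMAStep E F) : eqVars F ⊆ eqVars E := by
  intro y hy
  obtain ⟨he, -⟩ | he | ⟨he, -⟩ | ⟨he, -, -⟩ := h
  · rw [eqVars_union] at hy
    rcases hy with hy | hy
    · exact eqVars_mono Set.sdiff_subset hy
    · exact ⟨_, he, (eqVars_zipEqs_subset hy).imp occurs_fn.2 occurs_fn.2⟩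
  · exact eqVars_mono Set.sdiff_subset hy
  · rw [eqVars_union] at hy
    rcases hy with hy | hy
    · exact eqVars_mono Set.sdiff_subset hy
    · exact ⟨_, he, (mem_eqVars_singleton.1 hy).symm⟩
  · rw [eqVars_union] at hy
    rcases hy with hy | hy
    · exact ⟨_, he, mem_eqVars_singleton.1 hy⟩
    · rcases mem_eqVars_substE_single.1 hy with ⟨-, hy⟩ | ⟨-, hy⟩
      · exact eqVars_mono Set.sdiff_subset hy
      · exact ⟨_, he, .inr hy⟩

theorem MMAStep.exists_reachable_insert (h : MMAStep E F) (hv : v ∉ eqVars E)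
    (hr : ¬ Occurs v r) :
    ∃ r', ¬ Occurs v r' ∧ Reachable (insert (var v, r) E) (insert (var v, r') F) := by
  have hne : ∀ e ∈ E, (var v, r) ≠ e := fun e he h => hv ⟨e, he, .inl (h ▸ .var)⟩
  obtain ⟨he, hlen⟩ | he | ⟨he, ht⟩ | ⟨he, ht, -⟩ := h
  · refine ⟨r, hr, .single ?_⟩
    rw [← Set.insert_union, Set.insert_sdiff_singleton_comm (hne _ he)]
    exact .decomp (.inr he) hlen
  · refine ⟨r, hr, .single ?_⟩
    rw [Set.insert_sdiff_singleton_comm (hne _ he)]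
    exact .delete (.inr he)
  · refine ⟨r, hr, .single ?_⟩
    rw [← Set.insert_union, Set.insert_sdiff_singleton_comm (hne _ he)]
    exact .flip (.inr he) ht
  · refine ⟨_, fun h => ?_, reachable_insert_elim hv he ht⟩
    rcases occurs_subst_single.1 h with ⟨-, h⟩ | ⟨-, h⟩
    · exact hr h
    · exact hv ⟨_, he, .inr h⟩

theorem Reachable.exists_reachable_insert (h : Reachable E F) (hv : v ∉ eqVars E)
    (hr : ¬ Occurs v r) :
    v ∉ eqVars F ∧
      ∃ r', ¬ Occurs v r' ∧ Reachable (insert (var v, r) E) (insert (var v, r') F) := by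
  induction h with
  | refl => exact ⟨hv, r, hr, .refl⟩
  | tail _ hstep ih =>
    obtain ⟨hvF, r', hr', hreach⟩ := ih
    obtain ⟨r'', hr'', hreach'⟩ := hstep.exists_reachable_insert hvF hr'
    exact ⟨fun h => hvF (hstep.eqVars_subset h), r'', hr'', hreach.trans hreach'⟩

theorem Solved.insert_var (hE : Solved E) (hv : v ∉ eqVars E) (hr : ¬ Occurs v r)
    (hdom : ∀ x t, (var x, t) ∈ E → ¬ Occurs x r) : Solved (insert (var v, r) E) := by
  rintro e (rfl | he)
  · exact ⟨v, r, rfl, hr, fun h => hv (eqVars_mono (by simp) h)⟩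
  · obtain ⟨x, t, rfl, ht, hx⟩ := hE e he
    refine ⟨x, t, rfl, ht, ?_⟩
    rintro ⟨e', ⟨rfl | he', hne⟩, hxe⟩
    · rcases hxe with hxv | hxr
      · exact hv ⟨_, he, .inl (occurs_var.1 hxv ▸ .var)⟩
      · exact hdom x t he hxr
    · exact hx ⟨e', ⟨he', hne⟩, hxe⟩

theorem varSet_finite (t : Trm) : (varSet t).Finite := by
  induction t with
  | var x => exact (Set.finite_singleton x).subset fun y hy => occurs_var.1 hy
  | fn f ts ih =>
    refine (ts.finite_toSet.biUnion ih).subset fun x hx => ?_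
    obtain ⟨t, ht, hxt⟩ := occurs_fn.1 hx
    exact Set.mem_biUnion ht hxt

/- The set `D` bounds the solved variables of `E` that occur in `r`. Eliminating one of them
introduces no other: the term it is bound to contains no solved variable. -/
theorem Solved.exists_reachable_insert_of_bound (hE : Solved E) (hv : v ∉ eqVars E) (D : Finset ℕ)
    (hr : ¬ Occurs v r) (hD : ∀ x t, (var x, t) ∈ E → Occurs x r → x ∈ D) :
    ∃ F, Reachable (insert (var v, r) E) F ∧ Solved F := by
  induction D using Finset.induction generalizing r with
  | empty => exact ⟨_, .refl, hE.insert_var hv hr fun x t he hx => by simpa using hD x t he hx⟩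
  | insert a D _ ih =>
    by_cases ha : ∃ t, (var a, t) ∈ E ∧ Occurs a r
    · obtain ⟨t, he, -⟩ := ha
      have hat : ¬ Occurs a t := hE.not_occurs he
      have hstep := reachable_insert_elim (r := r) hv he hat
      rw [substE_single_eq_self (hE.notMem_eqVars_diff he), Set.insert_sdiff_self_of_mem he]
        at hstep
      have hr' : ¬ Occurs v (r.subst (single a t)) := fun h =>
        (occurs_subst_single.1 h).elim (hr ·.2) fun h => hv ⟨_, he, .inr h.2⟩
      obtain ⟨F, hF, hsolved⟩ := ih hr' fun y u hy hyr => by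
        rcases occurs_subst_single.1 hyr with ⟨hya, hyr⟩ | ⟨-, hyt⟩
        · exact (Finset.mem_insert.1 (hD y u hy hyr)).resolve_left hya
        · refine absurd ⟨_, ⟨he, fun h => ?_⟩, .inr hyt⟩ (hE.notMem_eqVars_diff hy)
          obtain ⟨⟨⟩, -⟩ := Prod.mk.inj (Set.mem_singleton_iff.1 h)
          exact hat hyt
      exact ⟨F, hstep.trans hF, hsolved⟩
    · refine ih hr fun y u hy hyr => (Finset.mem_insert.1 (hD y u hy hyr)).resolve_left ?_
      rintro rfl
      exact ha ⟨u, hy, hyr⟩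

theorem Solved.exists_reachable_insert (hE : Solved E) (hv : v ∉ eqVars E) (hr : ¬ Occurs v r) :
    ∃ F, Reachable (insert (var v, r) E) F ∧ Solved F :=
  hE.exists_reachable_insert_of_bound hv (varSet_finite r).toFinset hr fun _ _ _ hx =>
    (varSet_finite r).mem_toFinset.2 hx

theorem WNSTO.insert_var (hE : WNSTO E) (hv : v ∉ eqVars E) (hr : ¬ Occurs v r) :
    WNSTO (insert (var v, r) E) := by
  obtain ⟨F, hreach, hF⟩ := wnsto_iff.1 hE
  obtain ⟨hvF, r', hr', hreach'⟩ := hreach.exists_reachable_insert hv hr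
  refine .of_reachable hreach' (wnsto_iff.2 ?_)
  rcases hF with ⟨f, ts, g, us, he, hclash⟩ | hF
  · exact ⟨_, .refl, .inl ⟨f, ts, g, us, .inr he, hclash⟩⟩
  · exact (hF.exists_reachable_insert hvF hr').imp fun _ h => ⟨h.1, .inr h.2⟩

end SetAside

namespace WNSTO

variable {E : EqSet} {x f g : ℕ} {t : Trm} {ts us : List Trm}

theorem of_var_mem (he : (var x, t) ∈ E) (ht : ¬ Occurs x t)
    (h : WNSTO (substE (single x t) (E \ {(var x, t)}))) : WNSTO E := by
  refine .of_reachable (reachable_elim he ht) (h.insert_var ?_ ht)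
  simp [mem_eqVars_substE_single, ht]

theorem of_fn_var_mem (he : (fn f ts, var x) ∈ E) (ht : ¬ Occurs x (fn f ts))
    (h : WNSTO (substE (single x (fn f ts)) (E \ {(fn f ts, var x), (var x, fn f ts)}))) :
    WNSTO E := by
  refine .of_reachable (.single (.flip he (by simp))) (of_var_mem (.inr rfl) ht ?_)
  rwa [Set.union_sdiff_right, Set.sdiff_sdiff, Set.singleton_union]

theorem of_fn_fn_mem (he : (fn f ts, fn g us) ∈ E)
    (h : ts.length = us.length → WNSTO (zipEqs ts us ∪ E \ {(fn f ts, fn g us)})) : WNSTO E := by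
  by_cases hfg : f = g ∧ ts.length = us.length
  · obtain ⟨rfl, hlen⟩ := hfg
    exact .of_reachable (.single (.decomp he hlen)) (Set.union_comm _ _ ▸ h hlen)
  · exact ⟨E, .refl, .inl ⟨f, ts, g, us, he, by tauto⟩⟩

end WNSTO

theorem wnsto_empty : WNSTO ∅ :=
  wnsto_iff.2 ⟨∅, .refl, .inr fun _ he => he.elim⟩

/-- `E` consists of equations `lᵢ ≐ rᵢ` such that the tuples `l` and `r` share no variable and `r`
is linear. Equations of `l ≐̈ r` may be missing from `E`, because MMA removes an equation together
with its repetitions in the tuples. -/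
structure LinearSystem (E : EqSet) (l r : List Trm) : Prop where
  subset_zipEqs : E ⊆ zipEqs l r
  disjoint : Disjoint (varsL l) (varsL r)
  linear : ∀ x, countL x r ≤ 1

namespace LinearSystem

variable {E : EqSet} {a b : Trm} {l r : List Trm}

theorem tail (h : LinearSystem E (a :: l) (b :: r)) : LinearSystem (E \ {(a, b)}) l r where
  subset_zipEqs := Set.sdiff_singleton_subset_iff.2 (zipEqs_cons ▸ h.subset_zipEqs)
  disjoint := h.disjoint.mono (fun _ hx => mem_varsL_cons.2 (.inr hx))
    fun _ hx => mem_varsL_cons.2 (.inr hx)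
  linear x := le_trans (by simp [countL_cons]) (h.linear x)

theorem not_occurs_of_occurs_left {x : ℕ} (h : LinearSystem E (a :: l) (b :: r))
    (hx : Occurs x a) : ¬ Occurs x b ∧ x ∉ varsL r := by
  have := Set.disjoint_left.1 h.disjoint (mem_varsL_cons.2 (.inl hx))
  rwa [mem_varsL_cons, not_or] at this

theorem notMem_of_occurs_right {x : ℕ} (h : LinearSystem E (a :: l) (b :: r))
    (hx : Occurs x b) : ¬ Occurs x a ∧ x ∉ varsL l ∧ x ∉ varsL r := by
  have hl := Set.disjoint_right.1 h.disjoint (mem_varsL_cons.2 (.inl hx))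
  rw [mem_varsL_cons, not_or] at hl
  refine ⟨hl.1, hl.2, fun hxr => ?_⟩
  have := h.linear x
  rw [countL_cons] at this
  have := count_pos.2 hx
  have := countL_pos.2 hxr
  omega

theorem bind_left {v : ℕ} (h : LinearSystem E (var v :: l) (b :: r)) :
    LinearSystem (substE (single v b) (E \ {(var v, b)})) (l.map (subst (single v b))) r where
  subset_zipEqs := by
    have hsub := substE_subset_zipEqs (σ := single v b) h.tail.subset_zipEqs
    rwa [map_subst_single_eq_self (h.not_occurs_of_occurs_left .var).2] at hsub
  disjoint := Set.disjoint_left.2 fun x hx => by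
    rcases mem_varsL_map_subst_single.1 hx with ⟨-, hxl⟩ | ⟨-, hxb⟩
    · exact Set.disjoint_left.1 h.tail.disjoint hxl
    · exact (h.notMem_of_occurs_right hxb).2.2
  linear := h.tail.linear

theorem bind_right {w : ℕ} (h : LinearSystem E (a :: l) (var w :: r)) :
    LinearSystem (substE (single w a) (E \ {(a, var w), (var w, a)})) l r where
  subset_zipEqs := by
    obtain ⟨-, hwl, hwr⟩ := h.notMem_of_occurs_right .var
    have hdiff : E \ {(a, var w), (var w, a)} ⊆ E \ {(a, var w)} :=
      Set.sdiff_subset_sdiff_right (Set.singleton_subset_iff.2 (Set.mem_insert _ _))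
    have hsub := substE_subset_zipEqs (σ := single w a) (hdiff.trans h.tail.subset_zipEqs)
    rwa [map_subst_single_eq_self hwl, map_subst_single_eq_self hwr] at hsub
  disjoint := h.tail.disjoint
  linear := h.tail.linear

theorem decomp {f g : ℕ} {ts us : List Trm} (h : LinearSystem E (fn f ts :: l) (fn g us :: r))
    (hlen : ts.length = us.length) :
    LinearSystem (zipEqs ts us ∪ E \ {(fn f ts, fn g us)}) (ts ++ l) (us ++ r) where
  subset_zipEqs := by
    rw [zipEqs_append hlen]
    exact Set.union_subset_union_right _ h.tail.subset_zipEqs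
  disjoint := by
    simpa only [Set.disjoint_left, mem_varsL_append, mem_varsL_cons, occurs_fn] using h.disjoint
  linear := by simpa only [countL_append, countL_cons, count_fn] using h.linear

theorem wnsto : ∀ {l r : List Trm} {E : EqSet}, LinearSystem E l r → WNSTO E
  | [], _, E, h | _ :: _, [], E, h => by
    rw [Set.subset_empty_iff.1 (h.subset_zipEqs.trans (by simp [zipEqs]))]
    exact wnsto_empty
  | var v :: l, b :: r, E, h => by
    by_cases he : (var v, b) ∈ E
    · exact .of_var_mem he (h.not_occurs_of_occurs_left .var).1 h.bind_left.wnsto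
    · exact Set.sdiff_singleton_eq_self he ▸ h.tail.wnsto
  | fn f ts :: l, var w :: r, E, h => by
    by_cases he : (fn f ts, var w) ∈ E
    · exact .of_fn_var_mem he (h.notMem_of_occurs_right .var).1 h.bind_right.wnsto
    · exact Set.sdiff_singleton_eq_self he ▸ h.tail.wnsto
  | fn f ts :: l, fn g us :: r, E, h => by
    by_cases he : (fn f ts, fn g us) ∈ E
    · exact .of_fn_fn_mem he fun hlen => (h.decomp hlen).wnsto
    · exact Set.sdiff_singleton_eq_self he ▸ h.tail.wnsto
termination_by _ r => (r.map Trm.size).sum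
decreasing_by all_goals simp [size_fn, size_pos]

end LinearSystem

/-- `I` consists of input equations `sᵢ ≐ s'ᵢ` with `s` ground, `O` consists of output equations
`tᵢ ≐ t'ᵢ` such that the tuples `t` and `t'` share no variable, and every variable with several
occurrences in `t'` occurs in `I`. As in `LinearSystem`, equations of the tuples may be missing. -/
structure WeaklyLinearSystem (I O : EqSet) (s s' t t' : List Trm) : Prop where
  input_subset : I ⊆ zipEqs s s'
  output_subset : O ⊆ zipEqs t t'
  ground : ∀ u ∈ s, Ground u
  disjoint : Disjoint (varsL t) (varsL t')
  linear : ∀ x ∉ eqVars I, countL x t' ≤ 1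

namespace WeaklyLinearSystem

variable {I O : EqSet} {a b : Trm} {s s' t t' : List Trm}

theorem ground_head (h : WeaklyLinearSystem I O (a :: s) s' t t') : Ground a :=
  h.ground a List.mem_cons_self

theorem ground_tail (h : WeaklyLinearSystem I O (a :: s) s' t t') : ∀ u ∈ s, Ground u :=
  fun u hu => h.ground u (List.mem_cons_of_mem a hu)

theorem input_diff_subset (h : WeaklyLinearSystem I O (a :: s) (b :: s') t t') :
    I \ {(a, b)} ⊆ zipEqs s s' :=
  Set.sdiff_singleton_subset_iff.2 (zipEqs_cons ▸ h.input_subset)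

theorem tail (h : WeaklyLinearSystem I O (a :: s) (b :: s') t t') (he : (a, b) ∉ I) :
    WeaklyLinearSystem I O s s' t t' where
  __ := h
  input_subset := Set.sdiff_singleton_eq_self he ▸ h.input_diff_subset
  ground := h.ground_tail

theorem bind {w : ℕ} (h : WeaklyLinearSystem I O (a :: s) (var w :: s') t t') :
    WeaklyLinearSystem (substE (single w a) (I \ {(a, var w), (var w, a)}))
      (substE (single w a) (O \ {(a, var w), (var w, a)})) s (s'.map (subst (single w a)))
      (t.map (subst (single w a))) (t'.map (subst (single w a))) where
  input_subset := by
    have hws : w ∉ varsL s := fun ⟨u, hu, hw⟩ => h.ground_tail u hu w hw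
    have hdiff : I \ {(a, var w), (var w, a)} ⊆ I \ {(a, var w)} :=
      Set.sdiff_subset_sdiff_right (Set.singleton_subset_iff.2 (Set.mem_insert _ _))
    have hsub := substE_subset_zipEqs (σ := single w a) (hdiff.trans h.input_diff_subset)
    rwa [map_subst_single_eq_self hws] at hsub
  output_subset := substE_subset_zipEqs (Set.sdiff_subset.trans h.output_subset)
  ground := h.ground_tail
  disjoint := h.disjoint.mono (varsL_map_subst_single_subset h.ground_head)
    (varsL_map_subst_single_subset h.ground_head)
  linear x hx := by
    have ha := h.ground_head
    by_cases hxw : x = w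
    · have hx0 : x ∉ varsL (t'.map (subst (single w a))) := fun hxt =>
        (mem_varsL_map_subst_single.1 hxt).elim (·.1 hxw) fun hxa => ha x hxa.2
      have := mt countL_pos.1 hx0
      omega
    · refine (countL_map_subst_single_le ha).trans (h.linear x ?_)
      rintro ⟨e, he, hxe⟩
      refine hx (mem_eqVars_substE_single.2 (.inl ⟨hxw, e, ⟨he, ?_⟩, hxe⟩))
      rintro (rfl | rfl) <;> simp [occurs_var, hxw, ha x] at hxe

theorem decomp {f g : ℕ} {ts us : List Trm}
    (h : WeaklyLinearSystem I O (fn f ts :: s) (fn g us :: s') t t')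
    (hlen : ts.length = us.length) :
    WeaklyLinearSystem (zipEqs ts us ∪ I \ {(fn f ts, fn g us)}) (O \ {(fn f ts, fn g us)})
      (ts ++ s) (us ++ s') t t' where
  input_subset := by
    rw [zipEqs_append hlen]
    exact Set.union_subset_union_right _ h.input_diff_subset
  output_subset := Set.sdiff_subset.trans h.output_subset
  ground u hu := by
    rcases List.mem_append.1 hu with hu | hu
    · exact fun x hx => h.ground_head x (.fn hu hx)
    · exact h.ground_tail u hu
  disjoint := h.disjoint
  linear x hx := by
    rw [eqVars_union, Set.mem_union, not_or] at hx
    refine h.linear x ?_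
    rintro ⟨e, he, hxe⟩
    by_cases heq : e = (fn f ts, fn g us)
    · subst heq
      rcases hxe with hxts | hxus
      · exact h.ground_head x hxts
      · exact hx.1 (varsL_subset_eqVars_zipEqs hlen (occurs_fn.1 hxus))
    · exact hx.2 ⟨e, ⟨he, heq⟩, hxe⟩

theorem wnsto_of_input_eq_empty (h : WeaklyLinearSystem ∅ O s s' t t') : WNSTO O :=
  LinearSystem.wnsto ⟨h.output_subset, h.disjoint, fun x => h.linear x (by simp [eqVars])⟩

theorem wnsto : ∀ {s s' t t' : List Trm} {I O : EqSet},
    WeaklyLinearSystem I O s s' t t' → WNSTO (I ∪ O)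
  | [], _, _, _, I, O, h | _ :: _, [], _, _, I, O, h => by
    obtain rfl := Set.subset_empty_iff.1 (h.input_subset.trans (by simp [zipEqs]))
    exact (Set.empty_union O).symm ▸ h.wnsto_of_input_eq_empty
  | var v :: _, _ :: _, _, _, _, _, h => absurd .var (h.ground_head v)
  | fn f ts :: s, var w :: s', t, t', I, O, h => by
    by_cases he : (fn f ts, var w) ∈ I
    · refine .of_fn_var_mem (.inl he) (h.ground_head w) ?_
      rw [Set.union_sdiff_distrib, substE, Set.image_union]
      exact h.bind.wnsto
    · exact (h.tail he).wnsto
  | fn f ts :: s, fn g us :: s', t, t', I, O, h => by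
    by_cases he : (fn f ts, fn g us) ∈ I
    · refine .of_fn_fn_mem (.inl he) fun hlen => ?_
      rw [Set.union_sdiff_distrib, ← Set.union_assoc]
      exact (h.decomp hlen).wnsto
    · exact (h.tail he).wnsto
termination_by s => (s.map Trm.size).sum
decreasing_by all_goals simp [size_fn]

end WeaklyLinearSystem

theorem stmt11_general (s t s' t' : List Trm) (hlen_in : s.length = s'.length)
    (hdisj : varsL t ∩ varsL t' = ∅) (hground : ∀ u ∈ s, Ground u)
    (hweaklin : ∀ x, 2 ≤ countL x (s' ++ t') → x ∈ varsL s') :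
    WNSTO (zipEqs s s' ∪ zipEqs t t') := by
  refine WeaklyLinearSystem.wnsto (s := s) (s' := s') (t := t) (t' := t')
    ⟨subset_rfl, subset_rfl, hground, Set.disjoint_iff_inter_eq_empty.2 hdisj, fun x hx => ?_⟩
  have hxs' : x ∉ varsL s' := fun h => hx (varsL_subset_eqVars_zipEqs hlen_in h)
  have hcount := mt (hweaklin x) hxs'
  rw [countL_append] at hcount
  omega

/-- Let `A = p(s; t)` and `H = p(s′; t′)` be moded atoms with the same predicate
symbol (so `s, s′` have equal lengths and `t, t′` have equal lengths), such
that `Var(A) ∩ Var(H) = ∅`, every term of the input tuple `s` is ground, and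
`H` is weakly linear: every variable with more than one occurrence in `H`
occurs in an input position of `H` (i.e. occurs in `s′`).  Then the equation
set `(s ≐̈ s′) ∪ (t ≐̈ t′)` is WNSTO. -/
theorem stmt11 (s t s' t' : List Trm)
    (hlen_in : s.length = s'.length) (hlen_out : t.length = t'.length)
    (hdisj : varsL (s ++ t) ∩ varsL (s' ++ t') = ∅)
    (hground : ∀ u ∈ s, Ground u)
    (hweaklin : ∀ x, 2 ≤ countL x (s' ++ t') → x ∈ varsL s') :
    WNSTO (zipEqs s s' ∪ zipEqs t t') := by
  refine stmt11_general s t s' t' hlen_in (Set.subset_empty_iff.1 (hdisj ▸ ?_)) hground hweaklin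
  exact fun x hx => ⟨mem_varsL_append.2 (.inr hx.1), mem_varsL_append.2 (.inr hx.2)⟩
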